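/- Let A be a nonempty set of labels and let 𝕄 be the category whose objects are pointed subdistribution coalgebras (X, ξ : X → D≤1(A×X), x₀ ∈ X) and whose morphisms are lax homomorphisms. Then: (1) there is no small category ℙ and functor J : ℙ → 𝕄 such that for every morphism h : X → Y of 𝕄 with X reachable, h is J-open if and only if h is a proper homomorphism; and (2) there is no small category ℙ and functor J : ℙ → 𝕄 such that for all objects X and Y, X and Y are J-bisimilar (there is a span of J-open morphisms between them) if and only if X and Y are coalgebraically bisimilar (there is a span of proper homomorphisms between them). -/

import Mathlib

/-!
Compare the deadlocked one-state system `0` with the one-state loop `L` of probability `1`. They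
are not bisimilar and the inclusion `0 → L` is not proper, so under either hypothesis it is not
`J`-open. All commutation conditions over one-state systems hold trivially, so a failing lifting
problem yields `e : v ⟶ w` such that `J v` has no transitions, while `J w` has a transition of
some probability `p > 0` and maps laxly to `L`.

Lax maps never decrease the probability of a single transition, whereas the proper quotient
`U → L` of the uniform system `U` on `n + 1` states, all transitions of which have probability
`1 / (n + 1)`, splits the loop into arbitrarily small pieces. Since `J v` maps to every system by
the constant map at the initial state, a `J`-open map `Z → L` lifts `J w → L` to `J w → Z`, and a
lax map `Z → U` then gives `p ≤ 1 / (n + 1)`; this is false for large `n`. With `Z = U` this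
contradicts openness of the proper map `U → L`, and with general `Z` it contradicts
`J`-bisimilarity of the bisimilar systems `U` and `L`.
-/

open CategoryTheory

/-- A pointed subdistribution coalgebra over the label alphabet `A`: a pointed
coalgebra for the functor `D≤1(A × _)`. -/
structure PSys (A : Type) where
  St : Type
  tr : St → (A × St) →₀ NNReal
  sub : ∀ x, (tr x).sum (fun _ k => k) ≤ 1
  init : St

/-- A lax homomorphism of pointed subdistribution coalgebras. -/
def IsLaxP (A : Type) (X Y : PSys A) (f : X.St → Y.St) : Prop :=
  f X.init = Y.init ∧
  ∀ (x : X.St) (a : A) (y : Y.St),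
    Finsupp.mapDomain (Prod.map id f) (X.tr x) (a, y) ≤ Y.tr (f x) (a, y)

/-- A proper homomorphism of pointed subdistribution coalgebras. -/
def IsProperP (A : Type) (X Y : PSys A) (f : X.St → Y.St) : Prop :=
  f X.init = Y.init ∧
  ∀ (x : X.St) (a : A) (y : Y.St),
    Finsupp.mapDomain (Prod.map id f) (X.tr x) (a, y) = Y.tr (f x) (a, y)

/-- A state is reachable if it can be reached from the initial state by finitely many
transitions of positive probability. -/
def ReachP (A : Type) (X : PSys A) : X.St → Prop :=
  Relation.ReflTransGen (fun p q => ∃ a, 0 < X.tr p (a, q)) X.init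

/-- `J`-openness of a morphism of the category of pointed subdistribution coalgebras
and lax homomorphisms, with respect to the functor given by `Jobj` and `Jmap`. -/
def JOpenP (A : Type) {P : Type} [Category P] (Jobj : P → PSys A)
    (Jmap : ∀ {v w : P}, (v ⟶ w) → (Jobj v).St → (Jobj w).St)
    (X Y : PSys A) (h : X.St → Y.St) : Prop :=
  ∀ (v w : P) (e : v ⟶ w) (r : (Jobj v).St → X.St) (s : (Jobj w).St → Y.St),
    IsLaxP A (Jobj v) X r → IsLaxP A (Jobj w) Y s →
    s ∘ Jmap e = h ∘ r →
    ∃ d : (Jobj w).St → X.St, IsLaxP A (Jobj w) X d ∧ h ∘ d = s ∧ d ∘ Jmap e = r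

/-- The one-state system without transitions. -/
def deadlockSys (A : Type) : PSys A where
  St := Unit
  tr _ := 0
  sub _ := by simp
  init := ()

/-- The system on `n + 1` states in which every state moves, with the fixed label `a`, to a
uniformly distributed state. For `n = 0` this is a single state with a loop of probability `1`. -/
noncomputable def uniformSys (A : Type) (a : A) (n : ℕ) : PSys A where
  St := Fin (n + 1)
  tr _ := ∑ j : Fin (n + 1), Finsupp.single (a, j) ((n : NNReal) + 1)⁻¹
  sub _ := by
    rw [← Finsupp.sum_finsetSum_index (by simp) (by simp)]
    simp only [Finsupp.sum_single_index, Finset.sum_const, Finset.card_univ, Fintype.card_fin,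
      nsmul_eq_mul, Nat.cast_add, Nat.cast_one]
    exact (mul_inv_cancel₀ (by positivity)).le
  init := 0

theorem uniformSys_tr_self (A : Type) (a : A) (n : ℕ) (x y : Fin (n + 1)) :
    (uniformSys A a n).tr x (a, y) = ((n : NNReal) + 1)⁻¹ := by
  classical
  change (∑ j : Fin (n + 1), Finsupp.single (a, j) ((n : NNReal) + 1)⁻¹) (a, y) = _
  simp [Finsupp.finsetSum_apply, Finsupp.single_apply]

theorem uniformSys_tr_le (A : Type) (a b : A) (n : ℕ) (x y : Fin (n + 1)) :
    (uniformSys A a n).tr x (b, y) ≤ ((n : NNReal) + 1)⁻¹ := by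
  classical
  change (∑ j : Fin (n + 1), Finsupp.single (a, j) ((n : NNReal) + 1)⁻¹) (b, y) ≤ _
  by_cases h : a = b
  · simp [Finsupp.finsetSum_apply, Finsupp.single_apply, h]
  · simp [Finsupp.finsetSum_apply, h]

theorem uniformSys_reach (A : Type) (a : A) (n : ℕ) (x : (uniformSys A a n).St) :
    ReachP A (uniformSys A a n) x := by
  refine Relation.ReflTransGen.single ⟨a, ?_⟩
  have h := uniformSys_tr_self A a n (uniformSys A a n).init x
  rw [h]
  positivity

theorem le_mapDomain {α β : Type} (f : α → β) (μ : α →₀ NNReal) (x : α) :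
    μ x ≤ Finsupp.mapDomain f μ (f x) := by
  classical
  by_cases hx : x ∈ μ.support
  · rw [Finsupp.mapDomain, Finsupp.sum_apply, Finsupp.sum]
    refine le_trans ?_ (Finset.single_le_sum
      (f := fun z => (Finsupp.single (f z) (μ z)) (f x)) (fun _ _ => zero_le) hx)
    simp
  · simp [Finsupp.notMem_support_iff.mp hx]

/-- A lax homomorphism maps every transition to one of at least the same probability. -/
theorem IsLaxP.tr_le {A : Type} {X Y : PSys A} {f : X.St → Y.St} (hf : IsLaxP A X Y f)
    (x : X.St) (a : A) (x' : X.St) : X.tr x (a, x') ≤ Y.tr (f x) (a, f x') :=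
  (le_mapDomain (Prod.map id f) (X.tr x) (a, x')).trans (hf.2 x a (f x'))

theorem IsProperP.isLaxP {A : Type} {X Y : PSys A} {f : X.St → Y.St}
    (hf : IsProperP A X Y f) : IsLaxP A X Y f :=
  ⟨hf.1, fun x a y => (hf.2 x a y).le⟩

theorem isProperP_id (A : Type) (X : PSys A) : IsProperP A X X id :=
  ⟨rfl, fun x a y => by simp⟩

/-- The constant map at the initial state is lax as soon as the domain has no transitions. -/
theorem isLaxP_const {A : Type} {X : PSys A} (hX : ∀ x, X.tr x = 0) (Y : PSys A) :
    IsLaxP A X Y (fun _ => Y.init) :=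
  ⟨rfl, fun x a y => by simp [hX]⟩

theorem jOpenP_id (A : Type) {P : Type} [Category P] (Jobj : P → PSys A)
    (Jmap : ∀ {v w : P}, (v ⟶ w) → (Jobj v).St → (Jobj w).St) (X : PSys A) :
    JOpenP A Jobj Jmap X X id :=
  fun _ _ _ _ s _ hs h => ⟨s, hs, rfl, h⟩

theorem uniformSys_collapse (A : Type) (a : A) (n : ℕ) :
    IsProperP A (uniformSys A a n) (uniformSys A a 0) (fun _ => (0 : Fin 1)) := by
  refine ⟨rfl, fun x b y => ?_⟩
  change Finsupp.mapDomain (Prod.map id (fun _ : Fin (n + 1) => (0 : Fin 1)))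
      (∑ j : Fin (n + 1), Finsupp.single (a, j) ((n : NNReal) + 1)⁻¹) (b, y)
    = (∑ j : Fin 1, Finsupp.single (a, j) (((0 : ℕ) : NNReal) + 1)⁻¹) (b, y)
  rw [Finsupp.mapDomain_finsetSum]
  simp only [Finsupp.mapDomain_single, Prod.map, id, Finset.sum_const, Finset.card_univ,
    Fintype.card_fin]
  simp [Finsupp.smul_single]

theorem tr_eq_zero_of_lax_deadlock {A : Type} {X : PSys A} {f : X.St → (deadlockSys A).St}
    (hf : IsLaxP A X (deadlockSys A) f) (x : X.St) : X.tr x = 0 := by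
  refine Finsupp.ext fun ⟨a, x'⟩ => ?_
  have h := hf.tr_le x a x'
  exact le_antisymm h zero_le

theorem isLaxP_deadlock_uniformSys (A : Type) (a : A) (n : ℕ) :
    IsLaxP A (deadlockSys A) (uniformSys A a n) (fun _ => (uniformSys A a n).init) :=
  isLaxP_const (fun _ => rfl) _

/-- The deadlock and the loop are not bisimilar: the apex of a span would have no transitions,
as it maps to the deadlock, while its initial state must match the loop. -/
theorem not_bisim_deadlock_loop (A : Type) (a : A) (Z : PSys A)
    (f : Z.St → (deadlockSys A).St) (g : Z.St → (uniformSys A a 0).St)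
    (hf : IsProperP A Z (deadlockSys A) f) (hg : IsProperP A Z (uniformSys A a 0) g) : False := by
  have h := hg.2 Z.init a (0 : Fin 1)
  have h' : (uniformSys A a 0).tr (g Z.init) (a, (0 : Fin 1)) = _ :=
    uniformSys_tr_self A a 0 (g Z.init) 0
  have h₀ := h'.symm.trans (h.symm.trans (by
    rw [tr_eq_zero_of_lax_deadlock hf.isLaxP, Finsupp.mapDomain_zero]))
  simp at h₀

/-- If the inclusion of the deadlock into the loop is not `J`-open, then for some `n` no span of a
lax homomorphism to the uniform system and a `J`-open map to the loop exists: a lift along the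
latter would carry a transition of fixed probability into the uniform system, whose transition
probabilities are too small. -/
theorem exists_uniform_of_not_open (A : Type) (a : A) {P : Type} [Category P] (Jobj : P → PSys A)
    (Jmap : ∀ {v w : P}, (v ⟶ w) → (Jobj v).St → (Jobj w).St)
    (hno : ¬ JOpenP A Jobj Jmap (deadlockSys A) (uniformSys A a 0)
      (fun _ => (uniformSys A a 0).init)) :
    ∃ n : ℕ, ∀ (Z : PSys A) (f : Z.St → (uniformSys A a n).St)
      (g : Z.St → (uniformSys A a 0).St), IsLaxP A Z (uniformSys A a n) f →
      ¬ JOpenP A Jobj Jmap Z (uniformSys A a 0) g := by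
  simp only [JOpenP, not_forall] at hno
  obtain ⟨v, w, e, r, s, hr, hs, -, hnd⟩ := hno
  have hsub : Subsingleton (uniformSys A a 0).St := inferInstanceAs (Subsingleton (Fin 1))
  have hv := tr_eq_zero_of_lax_deadlock hr
  -- Both commutation conditions hold automatically here, so only laxness of the lift can fail.
  obtain ⟨z, b, z', hz⟩ : ∃ z b z', (Jobj w).tr z (b, z') ≠ 0 := by
    by_contra! hw
    refine hnd ⟨fun _ => (), isLaxP_const (Y := deadlockSys A) (fun z => ?_), ?_, rfl⟩
    · ext ⟨b, z'⟩
      simp [hw]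
    · exact funext fun _ => Subsingleton.elim _ _
  obtain ⟨n, hn⟩ := exists_nat_one_div_lt (pos_iff_ne_zero.mpr hz)
  refine ⟨n, fun Z f g hf hg => ?_⟩
  obtain ⟨d, hd, -, -⟩ := hg v w e (fun _ => Z.init) s (isLaxP_const hv Z) hs
    (funext fun _ => Subsingleton.elim _ _)
  have h := ((hd.tr_le z b z').trans (hf.tr_le _ b _)).trans (uniformSys_tr_le A a b n _ _)
  rw [one_div] at hn
  exact absurd (h.trans_lt hn) (lt_irrefl _)

/-- There is no small category `ℙ` and functor `J : ℙ → 𝕄` into the category of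
pointed subdistribution coalgebras and lax homomorphisms such that (1) `J`-openness
characterizes proper homomorphisms with reachable domain, nor such that
(2) `J`-bisimilarity characterizes coalgebraic bisimilarity.  (A functor `ℙ → 𝕄` is
given by its action `Jobj` on objects and its action `Jmap` on morphisms, which lands
in lax homomorphisms and respects identities and composition.) -/
theorem no_open_map_situation_for_generative_systems (A : Type) [Nonempty A] :
    (∀ (P : Type) [Category P] (Jobj : P → PSys A)
        (Jmap : ∀ {v w : P}, (v ⟶ w) → (Jobj v).St → (Jobj w).St),
        (∀ (v w : P) (e : v ⟶ w), IsLaxP A (Jobj v) (Jobj w) (Jmap e)) →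
        (∀ v : P, Jmap (𝟙 v) = id) →
        (∀ (u v w : P) (e : u ⟶ v) (e' : v ⟶ w), Jmap (e ≫ e') = Jmap e' ∘ Jmap e) →
        ¬ (∀ (X Y : PSys A) (h : X.St → Y.St), IsLaxP A X Y h →
            (∀ p, ReachP A X p) →
            (JOpenP A Jobj Jmap X Y h ↔ IsProperP A X Y h))) ∧
    (∀ (P : Type) [Category P] (Jobj : P → PSys A)
        (Jmap : ∀ {v w : P}, (v ⟶ w) → (Jobj v).St → (Jobj w).St),
        (∀ (v w : P) (e : v ⟶ w), IsLaxP A (Jobj v) (Jobj w) (Jmap e)) →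
        (∀ v : P, Jmap (𝟙 v) = id) →
        (∀ (u v w : P) (e : u ⟶ v) (e' : v ⟶ w), Jmap (e ≫ e') = Jmap e' ∘ Jmap e) →
        ¬ (∀ X Y : PSys A,
            ((∃ (Z : PSys A) (f : Z.St → X.St) (g : Z.St → Y.St),
                IsLaxP A Z X f ∧ IsLaxP A Z Y g ∧
                JOpenP A Jobj Jmap Z X f ∧ JOpenP A Jobj Jmap Z Y g) ↔
              (∃ (Z : PSys A) (f : Z.St → X.St) (g : Z.St → Y.St),
                IsProperP A Z X f ∧ IsProperP A Z Y g)))) := by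
  obtain ⟨a⟩ := ‹Nonempty A›
  constructor
  · intro P _ Jobj Jmap _ _ _ H
    obtain ⟨n, hn⟩ := exists_uniform_of_not_open A a Jobj Jmap fun ho =>
      not_bisim_deadlock_loop A a _ id _ (isProperP_id A _)
        ((H _ _ _ (isLaxP_deadlock_uniformSys A a 0) fun _ => Relation.ReflTransGen.refl).mp ho)
    have hp := uniformSys_collapse A a n
    exact hn _ id _ (isProperP_id A _).isLaxP
      ((H _ _ _ hp.isLaxP (uniformSys_reach A a n)).mpr hp)
  · intro P _ Jobj Jmap _ _ _ H
    obtain ⟨n, hn⟩ := exists_uniform_of_not_open A a Jobj Jmap fun ho => by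
      obtain ⟨Z, f, g, hf, hg⟩ := (H (deadlockSys A) (uniformSys A a 0)).mp
        ⟨_, id, _, (isProperP_id A _).isLaxP, isLaxP_deadlock_uniformSys A a 0,
          jOpenP_id A Jobj Jmap _, ho⟩
      exact not_bisim_deadlock_loop A a Z f g hf hg
    obtain ⟨Z, f, g, hf, -, -, hg⟩ := (H (uniformSys A a n) (uniformSys A a 0)).mpr
      ⟨_, id, _, isProperP_id A _, uniformSys_collapse A a n⟩
    exact hn Z f g hf hg
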